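/- arXiv:1310.1484 — 4 statements merged into one kernel-verified Lean document; each statement's English description precedes it below -/
import Mathlib

section
/- Let H be a complex Hilbert space and let n ≥ 1 and k_1,…,k_n be positive integers. There exists a constant C > 0, depending only on k_1 + ⋯ + k_n, with the following property. Suppose for each i = 1,…,n that {Π^{(i)}_α}_{α=1}^{k_i} are bounded self-adjoint projections on H with Π^{(i)}_α Π^{(i)}_β = 0 for α ≠ β and Σ_{α=1}^{k_i} Π^{(i)}_α = 1, and suppose ε > 0 satisfies C·ε < 1 and ‖[Π^{(i)}_{α_i}, Q^n_{i+1}(α)]‖ < ε for every multi-index α = (α_1,…,α_n) and every i = 1,…,n−1. Then there exist self-adjoint projections Π̃^{(i)}_α (α = 1,…,k_i, i = 1,…,n) satisfying Π̃^{(i)}_α Π̃^{(i)}_β = 0 for α ≠ β, Σ_{α=1}^{k_i} Π̃^{(i)}_α = 1, ‖Π̃^{(i)}_α − Π^{(i)}_α‖ ≤ C·ε for all i, α, and [Π̃^{(i)}_{α_i}, Q̃^n_{i+1}(α)] = 0 for every multi-index α and every i = 1,…,n−1, where Q̃^n_{i+1}(α) is built from the Π̃'s in the same way Q^n_{i+1}(α)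 is built from the Π's. -/
universe u

/-- The history operator `H^n_j(α) = Π^{(n-1)}_{α_{n-1}} ⋯ Π^{(j)}_{α_j}`
(0-based indexing), with `histOp n k P α n = 1`. -/
noncomputable def histOp {M : Type*} [Monoid M] (n : ℕ) (k : Fin n → ℕ)
    (P : (i : Fin n) → Fin (k i) → M) (α : (i : Fin n) → Fin (k i)) (j : ℕ) : M :=
  if h : j < n then histOp n k P α (j + 1) * P ⟨j, h⟩ (α ⟨j, h⟩) else 1
termination_by n - j
decreasing_by omega

/-- The operator `Q^n_j(α) = H^n_j(α)* H^n_j(α)` on a complex Hilbert space. -/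
noncomputable def Qop {H : Type*} [NormedAddCommGroup H] [InnerProductSpace ℂ H]
    [CompleteSpace H] (n : ℕ) (k : Fin n → ℕ)
    (P : (i : Fin n) → Fin (k i) → (H →L[ℂ] H)) (α : (i : Fin n) → Fin (k i)) (j : ℕ) :
    H →L[ℂ] H :=
  star (histOp n k P α j) * histOp n k P α j

/-!
The families are corrected from the last to the first. Once the later ones are exactly decoherent,
the operators `Q^n_{i+1}(α)` are themselves mutually orthogonal projections with sum `1`. Attach
labels `c_a` at mutual distance at least `1` to the members of the next family `P` and put
`T = ∑ c_a P_a`: since `T` almost commutes with all `Q^n_{i+1}(α)`, its pinching `Y` by them is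
close to `T`, and it commutes with them exactly. As the spectrum of `Y` clusters around the labels,
the spectral projections `E_a` of `Y` are a resolution of the identity commuting with all
`Q^n_{i+1}(α)`. With `S = ∑ c_a E_a`, the identity `(c_a - c_b) E_a P_b = E_a (S - T) P_b` bounds
`‖E_a P_b‖` for `a ≠ b`, hence `‖E_a - P_a‖`, by a multiple of `‖S - T‖`.

If `Y` is too far from `T` for the spectrum to split, the trivial resolution `1, 0, …, 0` is
already within the error bound.
-/

section OrthogonalIdempotents

variable {K A ι : Type*} [Fintype ι]

lemma sum_smul_mul_of_orthogonalIdempotents [CommSemiring K] [Semiring A] [Algebra K A]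
    {P : ι → A} (hP : OrthogonalIdempotents P) (c : ι → K) (b : ι) :
    (∑ a, c a • P a) * P b = c b • P b := by
  classical
  simp [Finset.sum_mul, hP.mul_eq]

lemma mul_sum_smul_of_orthogonalIdempotents [CommSemiring K] [Semiring A] [Algebra K A]
    {P : ι → A} (hP : OrthogonalIdempotents P) (c : ι → K) (b : ι) :
    P b * ∑ a, c a • P a = c b • P b := by
  classical
  simp [Finset.mul_sum, hP.mul_eq]

lemma sum_smul_mul_sum_smul_of_orthogonalIdempotents [CommSemiring K] [Semiring A] [Algebra K A]
    {P : ι → A} (hP : OrthogonalIdempotents P) (c d : ι → K) :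
    (∑ a, c a • P a) * ∑ a, d a • P a = ∑ a, (c a * d a) • P a := by
  simp only [Finset.mul_sum, mul_smul_comm, sum_smul_mul_of_orthogonalIdempotents hP, smul_smul,
    mul_comm]

variable [Field K] [Ring A] [Algebra K A] {P : ι → A}

lemma sum_smul_mul_sum_inv_smul (hP : CompleteOrthogonalIdempotents P) {c : ι → K}
    (hc : ∀ a, c a ≠ 0) : (∑ a, c a • P a) * ∑ a, (c a)⁻¹ • P a = 1 := by
  simp [sum_smul_mul_sum_smul_of_orthogonalIdempotents hP.toOrthogonalIdempotents, hc, hP.complete]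

lemma isUnit_sum_smul (hP : CompleteOrthogonalIdempotents P) {c : ι → K} (hc : ∀ a, c a ≠ 0) :
    IsUnit (∑ a, c a • P a) :=
  isUnit_iff_exists.2 ⟨_, sum_smul_mul_sum_inv_smul hP hc, by
    simpa using sum_smul_mul_sum_inv_smul hP fun a => inv_ne_zero (hc a)⟩

lemma algebraMap_sub_sum_smul (hP : CompleteOrthogonalIdempotents P) (x : K) (c : ι → K) :
    algebraMap K A x - ∑ a, c a • P a = ∑ a, (x - c a) • P a := by
  simp only [sub_smul, Finset.sum_sub_distrib, ← Finset.smul_sum, hP.complete,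
    Algebra.algebraMap_eq_smul_one]

lemma spectrum_sum_smul_subset (hP : CompleteOrthogonalIdempotents P) (c : ι → K) :
    spectrum K (∑ a, c a • P a) ⊆ Set.range c := by
  intro x hx
  by_contra hxc
  refine spectrum.mem_iff.1 hx ?_
  rw [algebraMap_sub_sum_smul hP]
  exact isUnit_sum_smul hP fun a => sub_ne_zero.2 fun h => hxc ⟨a, h.symm⟩

end OrthogonalIdempotents

section Pinching

variable {A κ : Type*} [Fintype κ] {Q : κ → A}

/-- The pinching of `T` by a family `Q` of projections: its block-diagonal part with respect
to `Q`. -/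
def pinching [NonUnitalNonAssocSemiring A] (Q : κ → A) (T : A) : A :=
  ∑ x, Q x * T * Q x

lemma commute_pinching [Semiring A] (hQ : OrthogonalIdempotents Q) (T : A) (x : κ) :
    Commute (pinching Q T) (Q x) := by
  classical
  have hright : pinching Q T * Q x = Q x * T * Q x := by
    simp [pinching, Finset.sum_mul, mul_assoc, hQ.mul_eq]
  have hleft : Q x * pinching Q T = Q x * T * Q x := by
    simp [pinching, Finset.mul_sum, ← mul_assoc, hQ.mul_eq]
  exact hright.trans hleft.symm

lemma pinching_sub_self [Ring A] (hQ : CompleteOrthogonalIdempotents Q) (T : A) :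
    pinching Q T - T = ∑ x, Q x * ⁅T, Q x⁆ := by
  simp only [pinching, Ring.lie_def, mul_sub, Finset.sum_sub_distrib, ← mul_assoc, (hQ.idem _).eq,
    ← Finset.sum_mul, hQ.complete, one_mul]

end Pinching

section NormedRing

variable {A : Type*} [NormedRing A]

lemma norm_mul_sub_mul_le_of_norm_le_one {a b c d : A} (hb : ‖b‖ ≤ 1) (hc : ‖c‖ ≤ 1) :
    ‖a * b - c * d‖ ≤ ‖a - c‖ + ‖b - d‖ := calc
  ‖a * b - c * d‖ = ‖(a - c) * b + c * (b - d)‖ := by noncomm_ring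
  _ ≤ ‖(a - c) * b‖ + ‖c * (b - d)‖ := norm_add_le _ _
  _ ≤ ‖a - c‖ + ‖b - d‖ := add_le_add
    (norm_mul_le_of_le le_rfl hb |>.trans_eq (mul_one _))
    (norm_mul_le_of_le hc le_rfl |>.trans_eq (one_mul _))

lemma norm_lie_le_norm_lie_add {a : A} (ha : ‖a‖ ≤ 1) (b c : A) :
    ‖⁅a, c⁆‖ ≤ ‖⁅a, b⁆‖ + 2 * ‖c - b‖ := calc
  ‖⁅a, c⁆‖ = ‖⁅a, b⁆ + a * (c - b) - (c - b) * a‖ := by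
    rw [Ring.lie_def, Ring.lie_def]
    noncomm_ring
  _ ≤ ‖⁅a, b⁆‖ + ‖a * (c - b)‖ + ‖(c - b) * a‖ :=
    (norm_sub_le _ _).trans (by gcongr; exact norm_add_le _ _)
  _ ≤ ‖⁅a, b⁆‖ + 1 * ‖c - b‖ + ‖c - b‖ * 1 := by
    gcongr
    · exact norm_mul_le_of_le ha le_rfl
    · exact norm_mul_le_of_le le_rfl ha
  _ = ‖⁅a, b⁆‖ + 2 * ‖c - b‖ := by ring

end NormedRing

/-- A resolution of the identity: a finite complete system of mutually orthogonal self-adjoint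
projections. -/
structure IsProjectionResolution {A ι : Type*} [Semiring A] [Star A] [Fintype ι]
    (P : ι → A) : Prop extends CompleteOrthogonalIdempotents P where
  isSelfAdjoint : ∀ a, IsSelfAdjoint (P a)

namespace IsProjectionResolution

section StarRing

variable {A ι κ : Type*} [Semiring A] [StarRing A] [Fintype ι] [Fintype κ]

lemma single [DecidableEq ι] (a : ι) : IsProjectionResolution (Pi.single a 1 : ι → A) where
  idem b := by by_cases h : b = a <;> simp [IsIdempotentElem, h]
  ortho b c hbc := by
    by_cases h : b = a
    · simp [Pi.single_apply, h ▸ hbc.symm]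
    · simp [h]
  complete := by simp
  isSelfAdjoint b := by by_cases h : b = a <;> simp [h]

lemma comp_equiv {P : ι → A} (hP : IsProjectionResolution P) (e : κ ≃ ι) :
    IsProjectionResolution (P ∘ e) where
  __ := (CompleteOrthogonalIdempotents.equiv e).2 hP.toCompleteOrthogonalIdempotents
  isSelfAdjoint x := hP.isSelfAdjoint (e x)

lemma mul_of_commute {P : ι → A} {Q : κ → A} (hP : IsProjectionResolution P)
    (hQ : IsProjectionResolution Q) (hPQ : ∀ a x, Commute (P a) (Q x)) :
    IsProjectionResolution fun p : ι × κ => P p.1 * Q p.2 where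
  idem p := (hP.idem p.1).mul_of_commute (hPQ p.1 p.2) (hQ.idem p.2)
  ortho p q hpq := by
    change P p.1 * Q p.2 * (P q.1 * Q q.2) = 0
    rw [mul_assoc, ← mul_assoc (Q p.2), ← (hPQ q.1 p.2).eq, mul_assoc, ← mul_assoc (P p.1)]
    by_cases h : p.1 = q.1
    · rw [hQ.ortho fun h' => hpq (Prod.ext h h'), mul_zero]
    · rw [hP.ortho h, zero_mul]
  complete := by
    simp only [Fintype.sum_prod_type, ← Finset.mul_sum, hQ.complete, mul_one, hP.complete]
  isSelfAdjoint p :=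
    (IsSelfAdjoint.commute_iff (hP.isSelfAdjoint p.1) (hQ.isSelfAdjoint p.2)).1 (hPQ p.1 p.2)

end StarRing

lemma norm_le_one {A ι : Type*} [NormedRing A] [StarRing A] [CStarRing A] [Fintype ι] {P : ι → A}
    (hP : IsProjectionResolution P) (a : ι) : ‖P a‖ ≤ 1 :=
  IsStarProjection.norm_le _ ⟨hP.idem a, hP.isSelfAdjoint a⟩

variable {A ι κ : Type*} [CStarAlgebra A] [Fintype ι] [Fintype κ] {P : ι → A} {Q : κ → A}

lemma isSelfAdjoint_sum_smul (hP : IsProjectionResolution P) (c : ι → ℝ) :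
    IsSelfAdjoint (∑ a, c a • P a) :=
  isSelfAdjoint_sum _ fun a _ => (IsSelfAdjoint.all (c a)).smul (hP.isSelfAdjoint a)

lemma norm_sum_smul_le (hP : IsProjectionResolution P) {c : ι → ℝ} {r : ℝ} (hr : 0 ≤ r)
    (hc : ∀ a, |c a| ≤ r) : ‖∑ a, c a • P a‖ ≤ r := by
  rw [← cfc_id' ℝ (∑ a, c a • P a) (hP.isSelfAdjoint_sum_smul c)]
  refine norm_cfc_le hr fun x hx => ?_
  obtain ⟨a, rfl⟩ := spectrum_sum_smul_subset hP.toCompleteOrthogonalIdempotents c hx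
  exact hc a

lemma exists_abs_sub_le_of_mem_spectrum (hP : IsProjectionResolution P) (c : ι → ℝ) {Y : A}
    {x : ℝ} (hx : x ∈ spectrum ℝ Y) : ∃ a, |x - c a| ≤ ‖Y - ∑ a, c a • P a‖ := by
  by_contra! hfar
  have hP' := hP.toCompleteOrthogonalIdempotents
  set T := ∑ a, c a • P a with hT
  set R := ∑ a, (x - c a)⁻¹ • P a
  have hne a : x - c a ≠ 0 := abs_pos.1 ((norm_nonneg _).trans_lt (hfar a))
  have hTR : (algebraMap ℝ A x - T) * R = 1 := by
    rw [hT, algebraMap_sub_sum_smul hP', sum_smul_mul_sum_inv_smul hP' hne]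
  obtain ⟨r, hr, hYr⟩ : ∃ r, (∀ a, r ∈ Set.Ioo ‖Y - T‖ |x - c a|) ∧ ‖Y - T‖ < r :=
    ((Filter.eventually_all.2 fun a => Ioo_mem_nhdsGT (hfar a)).and self_mem_nhdsWithin).exists
  have hr0 : 0 < r := (norm_nonneg _).trans_lt hYr
  have hRr : ‖R‖ ≤ r⁻¹ := hP.norm_sum_smul_le (inv_nonneg.2 hr0.le) fun a => by
    rw [abs_inv]
    exact inv_anti₀ hr0 (hr a).2.le
  have hlt : ‖R * (Y - T)‖ < 1 := calc
    ‖R * (Y - T)‖ ≤ r⁻¹ * ‖Y - T‖ := norm_mul_le_of_le hRr le_rfl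
    _ < r⁻¹ * r := by gcongr
    _ = 1 := inv_mul_cancel₀ hr0.ne'
  have hfactor : algebraMap ℝ A x - Y = (algebraMap ℝ A x - T) * (1 - R * (Y - T)) := by
    rw [mul_sub, ← mul_assoc, hTR]
    noncomm_ring
  refine spectrum.mem_iff.1 hx ?_
  rw [hfactor, hT, algebraMap_sub_sum_smul hP']
  exact (isUnit_sum_smul hP' hne).mul (isUnit_one_sub_of_norm_lt_one hlt)

lemma of_cfc [DecidableEq ι] {f : ι → ℝ → ℝ} {Y : A} (hYsa : IsSelfAdjoint Y)
    (hf : ∀ a, ContinuousOn (f a) (spectrum ℝ Y))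
    (hY : ∀ x ∈ spectrum ℝ Y, ∃ a, (fun b => f b x) = Pi.single a 1) :
    IsProjectionResolution fun a => cfc (f a) Y := by
  have hres : ∀ x ∈ spectrum ℝ Y, IsProjectionResolution fun b => f b x := fun x hx => by
    obtain ⟨a, ha⟩ := hY x hx
    exact ha ▸ single a
  refine { idem a := ?_, ortho a b hab := ?_, complete := ?_, isSelfAdjoint a := cfc_predicate _ _ }
  · rw [IsIdempotentElem, ← cfc_mul _ _ Y (hf a) (hf a)]
    exact cfc_congr fun x hx => (hres x hx).idem a
  · change cfc (f a) Y * cfc (f b) Y = 0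
    rw [← cfc_mul _ _ Y (hf a) (hf b), ← cfc_zero ℝ Y]
    exact cfc_congr fun x hx => (hres x hx).ortho hab
  · rw [← cfc_sum_univ f Y hf, ← cfc_one ℝ Y hYsa]
    exact cfc_congr fun x hx => (Finset.sum_apply _ _ _).trans (hres x hx).complete

lemma abs_sub_mul_norm_mul_le (hP : IsProjectionResolution P) {E : ι → A}
    (hE : IsProjectionResolution E) (c : ι → ℝ) (a b : ι) :
    |c a - c b| * ‖E a * P b‖ ≤ ‖∑ i, c i • E i - ∑ i, c i • P i‖ := by
  have hsylvester : (c a - c b) • (E a * P b) =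
      E a * (∑ i, c i • E i - ∑ i, c i • P i) * P b := by
    rw [mul_sub, mul_sum_smul_of_orthogonalIdempotents hE.toOrthogonalIdempotents, sub_mul,
      mul_assoc (E a), sum_smul_mul_of_orthogonalIdempotents hP.toOrthogonalIdempotents,
      sub_smul, smul_mul_assoc, mul_smul_comm]
  rw [← Real.norm_eq_abs, ← norm_smul, hsylvester]
  refine (norm_mul_le_of_le (norm_mul_le_of_le (hE.norm_le_one a) le_rfl)
    (hP.norm_le_one b)).trans_eq ?_
  rw [one_mul, mul_one]

lemma norm_sub_le_of_separated (hP : IsProjectionResolution P) {E : ι → A}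
    (hE : IsProjectionResolution E) {c : ι → ℝ} (hc : Pairwise fun a b => 1 ≤ |c a - c b|)
    (a : ι) : ‖E a - P a‖ ≤ 2 * Fintype.card ι * ‖∑ i, c i • E i - ∑ i, c i • P i‖ := by
  set η := ‖∑ i, c i • E i - ∑ i, c i • P i‖
  have hoff {i j : ι} (hij : i ≠ j) : ‖E i * P j‖ ≤ η :=
    (le_mul_of_one_le_left (norm_nonneg _) (hc hij)).trans (hP.abs_sub_mul_norm_mul_le hE c i j)
  have hdecomp : E a - P a = ∑ b, (E a * P b - E b * P a) := by
    rw [Finset.sum_sub_distrib, ← Finset.mul_sum, ← Finset.sum_mul, hP.complete, hE.complete,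
      mul_one, one_mul]
  have hterm b : ‖E a * P b - E b * P a‖ ≤ 2 * η := by
    obtain rfl | hab := eq_or_ne a b
    · simp [η]
    · linarith [norm_sub_le (E a * P b) (E b * P a), hoff hab, hoff hab.symm]
  calc ‖E a - P a‖ ≤ ∑ _b : ι, 2 * η := hdecomp ▸ norm_sum_le_of_le _ fun b _ => hterm b
    _ = 2 * Fintype.card ι * η := by rw [Finset.sum_const, Finset.card_univ, nsmul_eq_mul]; ring

lemma exists_commute_of_norm_sub_lt (hP : IsProjectionResolution P) {c : ι → ℝ}
    (hc : Pairwise fun a b => 1 ≤ |c a - c b|) {Y : A} (hY : IsSelfAdjoint Y)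
    (hsmall : ‖Y - ∑ a, c a • P a‖ < 1 / 4) :
    ∃ E : ι → A, IsProjectionResolution E ∧ (∀ Z, Commute Y Z → ∀ a, Commute (E a) Z) ∧
      ‖∑ a, c a • E a - Y‖ ≤ ‖Y - ∑ a, c a • P a‖ := by
  classical
  let bump (a : ι) (x : ℝ) : ℝ := max 0 (min 1 (2 - 4 * |x - c a|))
  have hbump a : ContinuousOn (bump a) (spectrum ℝ Y) := by fun_prop
  have hspec : ∀ x ∈ spectrum ℝ Y, ∃ a, |x - c a| ≤ ‖Y - ∑ a, c a • P a‖ ∧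
      (fun b => bump b x) = Pi.single a 1 := fun x hx => by
    obtain ⟨a, ha⟩ := hP.exists_abs_sub_le_of_mem_spectrum c hx
    refine ⟨a, ha, funext fun b => ?_⟩
    obtain rfl | hba := eq_or_ne b a
    · rw [Pi.single_eq_same]
      simp only [bump]
      rw [min_eq_left (by linarith), max_eq_right zero_le_one]
    · have htri := abs_sub_le (c b) x (c a)
      rw [abs_sub_comm (c b) x] at htri
      rw [Pi.single_eq_of_ne hba]
      exact max_eq_left ((min_le_right _ _).trans (by linarith [hc hba]))
  refine ⟨fun a => cfc (bump a) Y, of_cfc hY hbump fun x hx => (hspec x hx).imp fun _ => And.right,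
    fun Z hZ a => hZ.cfc_real _, ?_⟩
  have hround : ∑ a, c a • cfc (bump a) Y - Y = cfc (fun x => ∑ a, c a * bump a x - x) Y := by
    rw [cfc_sub .., cfc_id' .., ← Finset.sum_fn, cfc_sum_univ ..]
    simp only [cfc_const_mul _ _ Y (hbump _)]
  rw [hround]
  refine norm_cfc_le (norm_nonneg _) fun x hx => ?_
  obtain ⟨a, hxa, ha⟩ := hspec x hx
  have hsum : ∑ b, c b * bump b x = c a := by simp [congrFun ha, Pi.single_apply]
  rwa [hsum, Real.norm_eq_abs, abs_sub_comm]

lemma exists_commute_of_isSelfAdjoint [Nonempty ι] (hP : IsProjectionResolution P) {c : ι → ℝ}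
    (hc : Pairwise fun a b => 1 ≤ |c a - c b|) {Y : A} (hY : IsSelfAdjoint Y) :
    ∃ E : ι → A, IsProjectionResolution E ∧ (∀ Z, Commute Y Z → ∀ a, Commute (E a) Z) ∧
      ∀ a, ‖E a - P a‖ ≤ 8 * Fintype.card ι * ‖Y - ∑ a, c a • P a‖ := by
  classical
  set η := ‖Y - ∑ a, c a • P a‖
  obtain hlarge | hsmall := le_or_gt (1 / 4) η
  · have htrivial : IsProjectionResolution (Pi.single (Classical.arbitrary ι) 1 : ι → A) := single _
    refine ⟨_, htrivial, fun Z _ a => ?_, fun a => ?_⟩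
    · obtain rfl | h := eq_or_ne a (Classical.arbitrary ι) <;> simp [*]
    · have hcard : (1 : ℝ) ≤ Fintype.card ι := by exact_mod_cast Fintype.card_pos
      calc _ ≤ 1 + 1 := norm_sub_le_of_le (htrivial.norm_le_one a) (hP.norm_le_one a)
        _ ≤ 8 * Fintype.card ι * η := by nlinarith
  · obtain ⟨E, hE, hcomm, hEY⟩ := hP.exists_commute_of_norm_sub_lt hc hY hsmall
    refine ⟨E, hE, hcomm, fun a => (hP.norm_sub_le_of_separated hE hc a).trans ?_⟩
    have hEP : ‖∑ a, c a • E a - ∑ a, c a • P a‖ ≤ η + η :=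
      (norm_sub_le_norm_sub_add_norm_sub _ Y _).trans (by gcongr)
    calc _ ≤ 2 * Fintype.card ι * (η + η) := by gcongr
      _ ≤ 8 * Fintype.card ι * η := by nlinarith [show 0 ≤ Fintype.card ι * η by positivity]

lemma isSelfAdjoint_pinching (hQ : IsProjectionResolution Q) {T : A} (hT : IsSelfAdjoint T) :
    IsSelfAdjoint (pinching Q T) :=
  isSelfAdjoint_sum _ fun x _ => hT.conjugate_self (hQ.isSelfAdjoint x)

lemma norm_pinching_sub_le (hQ : IsProjectionResolution Q) {T : A} {η : ℝ}
    (hη : ∀ x, ‖⁅T, Q x⁆‖ ≤ η) : ‖pinching Q T - T‖ ≤ Fintype.card κ * η := by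
  rw [pinching_sub_self hQ.toCompleteOrthogonalIdempotents]
  refine (norm_sum_le_of_le _ fun x _ =>
    norm_mul_le_of_le (hQ.norm_le_one x) (hη x)).trans_eq ?_
  simp

end IsProjectionResolution

lemma norm_lie_sum_smul_le {A ι : Type*} [NormedRing A] [NormedAlgebra ℝ A] [Fintype ι]
    {P : ι → A} {c : ι → ℝ} {r : ℝ} (hc : ∀ a, |c a| ≤ r) {z : A} {δ : ℝ}
    (hδ : ∀ a, ‖⁅P a, z⁆‖ ≤ δ) : ‖⁅∑ a, c a • P a, z⁆‖ ≤ Fintype.card ι * (r * δ) := by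
  have hlie : ⁅∑ a, c a • P a, z⁆ = ∑ a, c a • ⁅P a, z⁆ := by
    simp only [Ring.lie_def, Finset.sum_mul, Finset.mul_sum, smul_sub, Finset.sum_sub_distrib,
      smul_mul_assoc, mul_smul_comm]
  rw [hlie]
  refine (norm_sum_le_of_le (n := fun _ => r * δ) _ fun a _ => ?_).trans_eq (by simp)
  rw [norm_smul]
  exact mul_le_mul (hc a) (hδ a) (norm_nonneg _) ((abs_nonneg _).trans (hc a))

lemma exists_separated_labels (ι : Type*) [Fintype ι] :
    ∃ c : ι → ℝ, (Pairwise fun a b => 1 ≤ |c a - c b|) ∧ ∀ a, |c a| ≤ Fintype.card ι := by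
  refine ⟨fun a => (Fintype.equivFin ι a : ℕ), fun a b hab => ?_, fun a => ?_⟩
  · have hne : (Fintype.equivFin ι a : ℤ) - (Fintype.equivFin ι b : ℤ) ≠ 0 := fun h =>
      hab ((Fintype.equivFin ι).injective (Fin.ext (by omega)))
    have habs := Int.one_le_abs hne
    dsimp only
    exact_mod_cast habs
  · rw [Nat.abs_cast]
    exact_mod_cast (Fintype.equivFin ι a).is_lt.le

lemma IsProjectionResolution.exists_commute_of_norm_lie_le {A ι κ : Type*} [CStarAlgebra A]
    [Fintype ι] [Nonempty ι] [Fintype κ] {P : ι → A} {Q : κ → A} (hP : IsProjectionResolution P)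
    (hQ : IsProjectionResolution Q) {δ : ℝ} (hδ : ∀ a x, ‖⁅P a, Q x⁆‖ ≤ δ) :
    ∃ E : ι → A, IsProjectionResolution E ∧ (∀ a x, Commute (E a) (Q x)) ∧
      ∀ a, ‖E a - P a‖ ≤ 8 * Fintype.card ι ^ 3 * Fintype.card κ * δ := by
  obtain ⟨c, hsep, hle⟩ := exists_separated_labels ι
  set T := ∑ a, c a • P a
  obtain ⟨E, hE, hcomm, hEP⟩ := hP.exists_commute_of_isSelfAdjoint hsep
    (hQ.isSelfAdjoint_pinching (hP.isSelfAdjoint_sum_smul c))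
  refine ⟨E, hE, fun a x => hcomm _ (commute_pinching hQ.toOrthogonalIdempotents T x) a,
    fun a => (hEP a).trans ?_⟩
  have hpinch := hQ.norm_pinching_sub_le fun x => norm_lie_sum_smul_le hle fun a => hδ a x
  calc _ ≤ _ := mul_le_mul_of_nonneg_left hpinch (by positivity)
    _ = 8 * Fintype.card ι ^ 3 * Fintype.card κ * δ := by ring

section History

variable {n : ℕ}

section Monoid

variable {M : Type*} [Monoid M]

lemma histOp_of_lt {k : Fin n → ℕ} (P : (i : Fin n) → Fin (k i) → M) (α : (i : Fin n) → Fin (k i))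
    {j : ℕ} (h : j < n) :
    histOp n k P α j = histOp n k P α (j + 1) * P ⟨j, h⟩ (α ⟨j, h⟩) := by
  rw [histOp, dif_pos h]

lemma histOp_of_le {k : Fin n → ℕ} (P : (i : Fin n) → Fin (k i) → M) (α : (i : Fin n) → Fin (k i))
    {j : ℕ} (h : n ≤ j) : histOp n k P α j = 1 := by
  rw [histOp, dif_neg h.not_gt]

lemma histOp_succ {k : Fin (n + 1) → ℕ} (P : (i : Fin (n + 1)) → Fin (k i) → M)
    (α : (i : Fin (n + 1)) → Fin (k i)) (j : ℕ) :
    histOp (n + 1) k P α (j + 1) = histOp n _ (Fin.tail P) (Fin.tail α) j := by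
  fun_induction histOp n _ (Fin.tail P) (Fin.tail α) j with
  | case1 j h ih => rw [histOp_of_lt P α (Nat.succ_lt_succ h), ih]; rfl
  | case2 j h => exact histOp_of_le P α (by omega)

end Monoid

section CStarRing

variable {A : Type*} [NormedRing A] [StarRing A] [CStarRing A] {k : Fin n → ℕ}
  {P P' : (i : Fin n) → Fin (k i) → A}

lemma norm_histOp_le_one (hP : ∀ i a, ‖P i a‖ ≤ 1) (α : (i : Fin n) → Fin (k i)) (j : ℕ) :
    ‖histOp n k P α j‖ ≤ 1 := by
  fun_induction histOp n k P α j with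
  | case1 j h ih => exact (norm_mul_le_of_le ih (hP _ _)).trans_eq (one_mul 1)
  | case2 => exact IsStarProjection.norm_le _ (.one A)

lemma norm_histOp_sub_le (hP : ∀ i a, ‖P i a‖ ≤ 1) (hP' : ∀ i a, ‖P' i a‖ ≤ 1) {η : ℝ}
    (hη : ∀ i a, ‖P' i a - P i a‖ ≤ η) (α : (i : Fin n) → Fin (k i)) (j : ℕ) :
    ‖histOp n k P' α j - histOp n k P α j‖ ≤ (n - j : ℕ) * η := by
  fun_induction histOp n k P' α j with
  | case1 j h ih =>
    rw [histOp_of_lt P α h, show n - j = n - (j + 1) + 1 by omega, Nat.cast_succ, add_one_mul]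
    exact (norm_mul_sub_mul_le_of_norm_le_one (hP' _ _) (norm_histOp_le_one hP α _)).trans
      (add_le_add ih (hη _ _))
  | case2 j h => simp [histOp_of_le P α (not_lt.1 h), Nat.sub_eq_zero_of_le (not_lt.1 h)]

end CStarRing

/-- The operator `Q^n_j(α)` of a family with values in a star monoid; on bounded operators it
unfolds to `Qop`. -/
noncomputable def histSq {M : Type*} [Monoid M] [Star M] {k : Fin n → ℕ}
    (P : (i : Fin n) → Fin (k i) → M) (α : (i : Fin n) → Fin (k i)) (j : ℕ) : M :=
  star (histOp n k P α j) * histOp n k P α j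

lemma histSq_of_le {M : Type*} [Monoid M] [StarMul M] {k : Fin n → ℕ}
    (P : (i : Fin n) → Fin (k i) → M) (α : (i : Fin n) → Fin (k i)) {j : ℕ} (h : n ≤ j) :
    histSq P α j = 1 := by
  rw [histSq, histOp_of_le P α h, star_one, one_mul]

lemma histSq_succ {M : Type*} [Monoid M] [Star M] {k : Fin (n + 1) → ℕ}
    (P : (i : Fin (n + 1)) → Fin (k i) → M) (α : (i : Fin (n + 1)) → Fin (k i)) (j : ℕ) :
    histSq P α (j + 1) = histSq (Fin.tail P) (Fin.tail α) j := by
  rw [histSq, histOp_succ, histSq]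

lemma histSq_zero {M : Type*} [Monoid M] [StarMul M] {k : Fin (n + 1) → ℕ}
    (P : (i : Fin (n + 1)) → Fin (k i) → M) (α : (i : Fin (n + 1)) → Fin (k i)) :
    histSq P α 0 = star (P 0 (α 0)) * histSq (Fin.tail P) (Fin.tail α) 0 * P 0 (α 0) := by
  rw [← histSq_succ, histSq, histOp_of_lt P α n.succ_pos, star_mul, histSq]
  simp only [mul_assoc]
  rfl

lemma norm_histSq_sub_le {A : Type*} [NormedRing A] [StarRing A] [CStarRing A] {k : Fin n → ℕ}
    {P P' : (i : Fin n) → Fin (k i) → A} (hP : ∀ i a, ‖P i a‖ ≤ 1) (hP' : ∀ i a, ‖P' i a‖ ≤ 1)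
    {η : ℝ} (hη : ∀ i a, ‖P' i a - P i a‖ ≤ η) (α : (i : Fin n) → Fin (k i)) (j : ℕ) :
    ‖histSq P' α j - histSq P α j‖ ≤ 2 * ((n - j : ℕ) * η) := by
  have hstar : ‖star (histOp n k P α j)‖ ≤ 1 := by
    rw [norm_star]
    exact norm_histOp_le_one hP α j
  refine (norm_mul_sub_mul_le_of_norm_le_one (norm_histOp_le_one hP' α j) hstar).trans ?_
  rw [← star_sub, norm_star, two_mul]
  exact add_le_add (norm_histOp_sub_le hP hP' hη α j) (norm_histOp_sub_le hP hP' hη α j)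

/-- Decoherence up to `ε`: every commutator `[Π^{(i)}_{α_i}, Q^n_{i+1}(α)]` has norm at most `ε`,
so that `ε = 0` is exact decoherence. The last index `i`, where `Q^n_{i+1}(α) = 1`, is included,
which only forces `0 ≤ ε`. -/
def IsDecoherentUpTo {A : Type*} [NormedRing A] [StarRing A] {k : Fin n → ℕ} (ε : ℝ)
    (P : (i : Fin n) → Fin (k i) → A) : Prop :=
  ∀ (α : (i : Fin n) → Fin (k i)) (i : Fin n), ‖⁅P i (α i), histSq P α (i + 1)⁆‖ ≤ ε

namespace IsDecoherentUpTo

variable {A : Type*} [NormedRing A] [StarRing A] {ε : ℝ}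

lemma nonneg {k : Fin n → ℕ} [∀ i, NeZero (k i)] {P : (i : Fin n) → Fin (k i) → A}
    (hP : IsDecoherentUpTo ε P) (i : Fin n) : 0 ≤ ε :=
  (norm_nonneg _).trans (hP (fun _ => 0) i)

lemma of_lt {k : Fin n → ℕ} {P : (i : Fin n) → Fin (k i) → A} (hε : 0 ≤ ε)
    (hP : ∀ (α : (i : Fin n) → Fin (k i)) (i : Fin n), (i : ℕ) + 1 < n →
      ‖⁅P i (α i), histSq P α (i + 1)⁆‖ ≤ ε) : IsDecoherentUpTo ε P := fun α i => by
  obtain h | h := lt_or_ge ((i : ℕ) + 1) n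
  · exact hP α i h
  · simpa [histSq_of_le P α h, Ring.lie_def] using hε

lemma commute {k : Fin n → ℕ} {P : (i : Fin n) → Fin (k i) → A} (hP : IsDecoherentUpTo 0 P)
    (α : (i : Fin n) → Fin (k i)) (i : Fin n) : Commute (P i (α i)) (histSq P α (i + 1)) :=
  commute_iff_lie_eq.2 (norm_le_zero_iff.1 (hP α i))

end IsDecoherentUpTo

lemma isDecoherentUpTo_succ_iff {A : Type*} [NormedRing A] [StarRing A] {ε : ℝ}
    {k : Fin (n + 1) → ℕ} [NeZero (k 0)] {P : (i : Fin (n + 1)) → Fin (k i) → A} :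
    IsDecoherentUpTo ε P ↔
      (∀ a β, ‖⁅P 0 a, histSq (Fin.tail P) β 0⁆‖ ≤ ε) ∧ IsDecoherentUpTo ε (Fin.tail P) := by
  simp only [IsDecoherentUpTo, Fin.forall_fin_succ, Fin.val_zero, Fin.val_succ, histSq_succ,
    Fin.forall_fin_succ_pi, Fin.tail_cons, Fin.cons_zero, Fin.cons_succ, forall_and,
    forall_const]
  rfl

section CStarAlgebra

variable {A : Type*} [CStarAlgebra A]

lemma isProjectionResolution_histSq {n : ℕ} {k : Fin n → ℕ} [∀ i, NeZero (k i)]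
    {P : (i : Fin n) → Fin (k i) → A} (hP : ∀ i, IsProjectionResolution (P i))
    (hdec : IsDecoherentUpTo 0 P) : IsProjectionResolution fun α => histSq P α 0 := by
  induction n with
  | zero =>
    classical
    convert IsProjectionResolution.single (A := A) (default : (i : Fin 0) → Fin (k i)) with α
    rw [histSq_of_le P α le_rfl, Subsingleton.elim α default, Pi.single_eq_same]
  | succ n ih =>
    obtain ⟨hlie, htail⟩ := isDecoherentUpTo_succ_iff.1 hdec
    have hcomm a β : Commute (P 0 a) (histSq (Fin.tail P) β 0) :=
      commute_iff_lie_eq.2 (norm_le_zero_iff.1 (hlie a β))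
    have hfactor α : histSq P α 0 = P 0 (α 0) * histSq (Fin.tail P) (Fin.tail α) 0 := by
      rw [histSq_zero, ((hP 0).isSelfAdjoint _).star_eq, (hcomm _ _).eq, mul_assoc,
        ((hP 0).idem _).eq]
    simp only [hfactor]
    exact ((hP 0).mul_of_commute (ih (fun i => hP i.succ) htail) hcomm).comp_equiv
      (Fin.consEquiv fun i => Fin (k i)).symm

/-- The factor by which the perturbation bound grows with each additional resolution, for at most
`M` resolutions with at most `M` members each: a tail of error `c ^ n * ε` leaves a commutator of
norm at most `(1 + 4 * n * c ^ n) * ε`, which is then multiplied by `8 * M ^ 3` and by the number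
`≤ M ^ M` of histories. -/
def decoherenceFactor (M : ℕ) : ℝ :=
  40 * M ^ (M + 4)

lemma one_le_decoherenceFactor {M : ℕ} (hM : 1 ≤ M) : 1 ≤ decoherenceFactor M := by
  have : (1 : ℝ) ≤ M ^ (M + 4) := one_le_pow₀ (by exact_mod_cast hM)
  rw [decoherenceFactor]
  linarith

lemma decoherenceFactor_pow_self_pos (M : ℕ) : 0 < decoherenceFactor M ^ M := by
  obtain rfl | hM := M.eq_zero_or_pos
  · simp
  · exact pow_pos (one_pos.trans_le (one_le_decoherenceFactor hM)) M

lemma correction_le_decoherenceFactor_pow_succ {M n a h : ℕ} (hn : n < M) (ha : a ≤ M)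
    (hh : h ≤ M ^ M) :
    8 * (a : ℝ) ^ 3 * h * (1 + 4 * n * decoherenceFactor M ^ n) ≤
      decoherenceFactor M ^ (n + 1) := by
  have hM : 1 ≤ M := by omega
  have hn' : (n : ℝ) ≤ M := by exact_mod_cast hn.le
  have ha' : (a : ℝ) ≤ M := by exact_mod_cast ha
  have hh' : (h : ℝ) ≤ M ^ M := by exact_mod_cast hh
  have hc : 1 ≤ decoherenceFactor M ^ n := one_le_pow₀ (one_le_decoherenceFactor hM)
  have hMc : 1 ≤ M * decoherenceFactor M ^ n := one_le_mul_of_one_le_of_one_le (mod_cast hM) hc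
  calc _ ≤ 8 * (M : ℝ) ^ 3 * M ^ M *
        (M * decoherenceFactor M ^ n + 4 * M * decoherenceFactor M ^ n) := by gcongr
    _ = decoherenceFactor M * decoherenceFactor M ^ n := by
      nth_rw 3 [decoherenceFactor]
      ring
    _ = decoherenceFactor M ^ (n + 1) := (pow_succ' _ n).symm

lemma card_histories_le {M n : ℕ} (hn : n ≤ M) {k : Fin n → ℕ} (hk : ∀ i, k i ≤ M) :
    Fintype.card ((i : Fin n) → Fin (k i)) ≤ M ^ M := calc
  Fintype.card ((i : Fin n) → Fin (k i)) ≤ M ^ n := by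
    simpa using Finset.prod_le_pow_card Finset.univ k M fun i _ => hk i
  _ ≤ M ^ M := by
    obtain rfl | hM := M.eq_zero_or_pos
    · simp [Nat.le_zero.1 hn]
    · exact Nat.pow_le_pow_right hM hn

lemma exists_head_commute_histSq {n : ℕ} {k : Fin (n + 1) → ℕ} [∀ i, NeZero (k i)] {ε η : ℝ}
    {P : (i : Fin (n + 1)) → Fin (k i) → A} {R : (i : Fin n) → Fin (k i.succ) → A}
    (hP : ∀ i, IsProjectionResolution (P i)) (hR : ∀ i, IsProjectionResolution (R i))
    (hlie : ∀ a β, ‖⁅P 0 a, histSq (Fin.tail P) β 0⁆‖ ≤ ε)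
    (hRP : ∀ i a, ‖R i a - P i.succ a‖ ≤ η) (hdec : IsDecoherentUpTo 0 R) :
    ∃ E : Fin (k 0) → A, IsProjectionResolution E ∧
      (∀ a β, Commute (E a) (histSq R β 0)) ∧
      ∀ a, ‖E a - P 0 a‖ ≤ 8 * k 0 ^ 3 * Fintype.card ((i : Fin n) → Fin (k i.succ)) *
        (ε + 4 * n * η) := by
  have hcommutator a β : ‖⁅P 0 a, histSq R β 0⁆‖ ≤ ε + 4 * n * η := calc
    _ ≤ ‖⁅P 0 a, histSq (Fin.tail P) β 0⁆‖ + 2 * ‖histSq R β 0 - histSq (Fin.tail P) β 0‖ :=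
      norm_lie_le_norm_lie_add ((hP 0).norm_le_one a) _ _
    _ ≤ ε + 2 * (2 * ((n - 0 : ℕ) * η)) := by
      gcongr
      · exact hlie a β
      · exact norm_histSq_sub_le (fun i => (hP i.succ).norm_le_one)
          (fun i => (hR i).norm_le_one) hRP β 0
    _ = ε + 4 * n * η := by rw [Nat.sub_zero]; ring
  simpa only [Fintype.card_fin] using (hP 0).exists_commute_of_norm_lie_le
    (isProjectionResolution_histSq hR hdec) hcommutator

lemma exists_isDecoherentUpTo_zero_near {M n : ℕ} (hn : n ≤ M) {k : Fin n → ℕ}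
    [∀ i, NeZero (k i)] (hk : ∀ i, k i ≤ M) {P : (i : Fin n) → Fin (k i) → A}
    (hP : ∀ i, IsProjectionResolution (P i)) {ε : ℝ} (hdec : IsDecoherentUpTo ε P) :
    ∃ P' : (i : Fin n) → Fin (k i) → A, (∀ i, IsProjectionResolution (P' i)) ∧
      (∀ i a, ‖P' i a - P i a‖ ≤ decoherenceFactor M ^ n * ε) ∧ IsDecoherentUpTo 0 P' := by
  induction n with
  | zero => exact ⟨P, hP, fun i => i.elim0, fun _ i => i.elim0⟩
  | succ n ih =>
    have hε := hdec.nonneg 0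
    obtain ⟨hlie, htail⟩ := isDecoherentUpTo_succ_iff.1 hdec
    obtain ⟨R, hR, hRP, hRdec⟩ := ih (by omega) (fun i => hk i.succ) (fun i => hP i.succ) htail
    obtain ⟨E, hE, hEcomm, hEP⟩ := exists_head_commute_histSq hP hR hlie hRP hRdec
    refine ⟨Fin.cons E R, Fin.forall_fin_succ.2 ⟨hE, hR⟩, Fin.forall_fin_succ.2 ⟨fun a => ?_,
      fun i a => ?_⟩, isDecoherentUpTo_succ_iff.2 ⟨fun a β => ?_, hRdec⟩⟩
    · have hfactor := correction_le_decoherenceFactor_pow_succ hn (hk 0)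
        (card_histories_le (by omega : n ≤ M) fun i => hk i.succ)
      calc ‖E a - P 0 a‖ ≤ _ := hEP a
        _ = _ * ε := by ring
        _ ≤ decoherenceFactor M ^ (n + 1) * ε := mul_le_mul_of_nonneg_right hfactor hε
    · have hgrow : decoherenceFactor M ^ n ≤ decoherenceFactor M ^ (n + 1) :=
        pow_le_pow_right₀ (one_le_decoherenceFactor (by omega)) n.le_succ
      exact (hRP i a).trans (mul_le_mul_of_nonneg_right hgrow hε)
    · exact norm_le_zero_iff.2 (commute_iff_lie_eq.1 (hEcomm a β))

end CStarAlgebra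

end History

theorem exact_decoherence_from_approximate_decoherence_general :
    ∃ C : ℕ → ℝ, (∀ m, 0 < C m) ∧
      ∀ (A : Type u) [CStarAlgebra A] (n : ℕ) (k : Fin n → ℕ) [∀ i, NeZero (k i)]
        (P : (i : Fin n) → Fin (k i) → A), (∀ i, IsProjectionResolution (P i)) →
        ∀ ε : ℝ, IsDecoherentUpTo ε P →
        ∃ Pt : (i : Fin n) → Fin (k i) → A, (∀ i, IsProjectionResolution (Pt i)) ∧
          (∀ i a, ‖Pt i a - P i a‖ ≤ C (∑ i, k i) * ε) ∧ IsDecoherentUpTo 0 Pt := by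
  refine ⟨fun m => decoherenceFactor m ^ m, decoherenceFactor_pow_self_pos, ?_⟩
  intro A _ n k _ P hP ε hdec
  have hk i : k i ≤ ∑ i, k i := Finset.single_le_sum_of_canonicallyOrdered (Finset.mem_univ i)
  have hn : n ≤ ∑ i, k i := by
    simpa using Finset.sum_le_sum fun i (_ : i ∈ Finset.univ) => NeZero.one_le (n := k i)
  obtain ⟨Pt, hPt, hnear, hPtdec⟩ := exists_isDecoherentUpTo_zero_near hn hk hP hdec
  refine ⟨Pt, hPt, fun i a => (hnear i a).trans ?_, hPtdec⟩
  exact mul_le_mul_of_nonneg_right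
    (pow_le_pow_right₀ (one_le_decoherenceFactor (i.pos.trans_le hn)) hn) (hdec.nonneg i)

/-- Theorem 4.1: there is a constant `C > 0`, depending only on `k₁ + ⋯ + kₙ`, such
that any family of complete systems of mutually orthogonal self-adjoint projections
`{Π^{(i)}_α}` on a complex Hilbert space whose commutators `[Π^{(i)}_{α_i}, Q^n_{i+1}(α)]`
all have norm `< ε`, with `C·ε < 1`, can be perturbed by at most `C·ε` in norm into a
family of complete systems of mutually orthogonal self-adjoint projections `{Π̃^{(i)}_α}`
with `[Π̃^{(i)}_{α_i}, Q̃^n_{i+1}(α)] = 0` for all histories `α` and all `i = 1,…,n−1`. -/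
theorem exact_decoherence_from_approximate_decoherence :
    ∃ C : ℕ → ℝ, (∀ m, 0 < C m) ∧
      ∀ (H : Type u) [NormedAddCommGroup H] [InnerProductSpace ℂ H] [CompleteSpace H]
        (n : ℕ), 1 ≤ n → ∀ (k : Fin n → ℕ), (∀ i, 1 ≤ k i) →
        ∀ P : (i : Fin n) → Fin (k i) → (H →L[ℂ] H),
        (∀ i a, IsSelfAdjoint (P i a)) →
        (∀ i a b, a ≠ b → P i a * P i b = 0) →
        (∀ i a, P i a * P i a = P i a) →
        (∀ i, ∑ a, P i a = 1) →
        ∀ ε : ℝ, 0 < ε → C (∑ i, k i) * ε < 1 →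
        (∀ (α : (i : Fin n) → Fin (k i)) (i : ℕ) (h : i + 1 < n),
          ‖P ⟨i, by omega⟩ (α ⟨i, by omega⟩) * Qop n k P α (i + 1) -
            Qop n k P α (i + 1) * P ⟨i, by omega⟩ (α ⟨i, by omega⟩)‖ < ε) →
        ∃ Pt : (i : Fin n) → Fin (k i) → (H →L[ℂ] H),
          (∀ i a, IsSelfAdjoint (Pt i a)) ∧
          (∀ i a b, a ≠ b → Pt i a * Pt i b = 0) ∧
          (∀ i a, Pt i a * Pt i a = Pt i a) ∧
          (∀ i, ∑ a, Pt i a = 1) ∧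
          (∀ i a, ‖Pt i a - P i a‖ ≤ C (∑ i, k i) * ε) ∧
          (∀ (α : (i : Fin n) → Fin (k i)) (i : ℕ) (h : i + 1 < n),
            Pt ⟨i, by omega⟩ (α ⟨i, by omega⟩) * Qop n k Pt α (i + 1) =
              Qop n k Pt α (i + 1) * Pt ⟨i, by omega⟩ (α ⟨i, by omega⟩)) := by
  obtain ⟨C, hC, hgeneral⟩ := exact_decoherence_from_approximate_decoherence_general
  refine ⟨C, hC, fun H _ _ _ n _ k hk P hsa horth hidem hsum ε hε _ hcomm => ?_⟩
  have (i : Fin n) : NeZero (k i) := .of_pos (hk i)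
  obtain ⟨Pt, hPt, hnear, hdec⟩ := hgeneral (H →L[ℂ] H) n k P
    (fun i => ⟨⟨⟨hidem i, horth i⟩, hsum i⟩, hsa i⟩) ε
    (.of_lt hε.le fun α i h => (hcomm α i h).le)
  exact ⟨Pt, fun i => (hPt i).isSelfAdjoint, fun i _ _ hab => (hPt i).ortho hab,
    fun i => (hPt i).idem, fun i => (hPt i).complete, hnear, fun α i _ => hdec.commute α ⟨i, _⟩⟩
end

section
/- Let a be a Hermitian d×d complex matrix, let Π be a self-adjoint projection of rank n ≥ 1, and set ā := Tr(Π a)/n. If ε > 0 and (1/n)·Tr(Π (a − ā·1)²) < ε², then a has an eigenvalue α with |α − ā| < ε. -/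
open scoped ComplexOrder

/-!
For positive semidefinite `P`, the functional `M ↦ Tr(P M)` is monotone in the Loewner order. If
`f ≥ r` on the spectrum of `A` then `f(A) ≥ r·1`, hence `Tr(P f(A)) ≥ r Tr P`. The theorem is the
contrapositive for `f x = (x - c)²` and `r = ε²`.
-/

theorem cfc_sub_const_pow {R A : Type*} {p : A → Prop} [CommRing R] [StarRing R] [MetricSpace R]
    [IsTopologicalRing R] [ContinuousStar R] [TopologicalSpace A] [Ring A] [StarRing A]
    [Algebra R A] [ContinuousFunctionalCalculus R A p] {a : A} (ha : p a) (r : R) (k : ℕ) :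
    cfc (fun x ↦ (x - r) ^ k) a = (a - algebraMap R A r) ^ k := by
  rw [cfc_pow (fun x ↦ x - r) k a, cfc_sub (fun x ↦ x) (fun _ ↦ r) a, cfc_id' R a, cfc_const r a]

section

open scoped MatrixOrder

variable {𝕜 m : Type*} [RCLike 𝕜] [Fintype m]

theorem posSemidef_of_isStarProjection {P : Matrix m m 𝕜} (hP : IsStarProjection P) :
    P.PosSemidef :=
  Matrix.nonneg_iff_posSemidef.mp hP.nonneg

theorem trace_mul_nonneg_of_posSemidef {P M : Matrix m m 𝕜} (hP : P.PosSemidef)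
    (hM : M.PosSemidef) : 0 ≤ (P * M).trace := by
  classical
  obtain ⟨B, rfl⟩ := CStarAlgebra.nonneg_iff_eq_star_mul_self.mp hP.nonneg
  rw [mul_assoc, Matrix.trace_mul_comm]
  exact (hM.mul_mul_conjTranspose_same B).trace_nonneg

theorem trace_mul_le_trace_mul_of_le {P M N : Matrix m m 𝕜} (hP : P.PosSemidef) (hMN : M ≤ N) :
    (P * M).trace ≤ (P * N).trace := by
  rw [← sub_nonneg, ← Matrix.trace_sub, ← mul_sub]
  exact trace_mul_nonneg_of_posSemidef hP (Matrix.le_iff.mp hMN)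

variable [DecidableEq m]

theorem exists_mem_spectrum_lt_of_re_trace_mul_cfc_lt {A P : Matrix m m 𝕜} (hA : A.IsHermitian)
    (hP : P.PosSemidef) (f : ℝ → ℝ) {r : ℝ}
    (h : RCLike.re (P * cfc f A).trace < r * RCLike.re P.trace) :
    ∃ x ∈ spectrum ℝ A, f x < r := by
  contrapose! h
  have hle : algebraMap ℝ (Matrix m m 𝕜) r ≤ cfc f A :=
    algebraMap_le_cfc f r A h (A.finite_real_spectrum.continuousOn f) hA.isSelfAdjoint
  have htrace := (RCLike.le_iff_re_im.mp (trace_mul_le_trace_mul_of_le hP hle)).1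
  rwa [Algebra.algebraMap_eq_smul_one, mul_smul_comm, mul_one, Matrix.trace_smul,
    RCLike.smul_re] at htrace

theorem eigenvalue_near_block_average_general {A P : Matrix m m 𝕜} (hA : A.IsHermitian)
    (hP : P.PosSemidef) (c : ℝ) {ε : ℝ} (hε : 0 ≤ ε)
    (h : RCLike.re (P * ((A - (c : 𝕜) • 1) * (A - (c : 𝕜) • 1))).trace <
      ε ^ 2 * RCLike.re P.trace) :
    ∃ α : ℝ, (α : 𝕜) ∈ spectrum 𝕜 A ∧ |α - c| < ε := by
  have hcfc : (A - (c : 𝕜) • 1) * (A - (c : 𝕜) • 1) = cfc (fun x : ℝ ↦ (x - c) ^ 2) A := by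
    rw [cfc_sub_const_pow hA.isSelfAdjoint, sq, IsScalarTower.algebraMap_apply ℝ 𝕜,
      Algebra.algebraMap_eq_smul_one (c : 𝕜)]
  rw [hcfc] at h
  obtain ⟨α, hα, hlt⟩ := exists_mem_spectrum_lt_of_re_trace_mul_cfc_lt hA hP _ h
  exact ⟨α, spectrum.algebraMap_mem 𝕜 hα, abs_lt_of_sq_lt_sq hlt hε⟩

end

/-- If `a` is a Hermitian `d×d` matrix, `P` a self-adjoint projection of rank `n ≥ 1`,
`ā = Tr(P a)/n`, and `(1/n)·Tr(P (a − ā·1)²) < ε²`, then `a` has an eigenvalue `α`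
with `|α − ā| < ε`. -/
theorem eigenvalue_near_block_average {d : ℕ} (hd : 1 ≤ d)
    (a : Matrix (Fin d) (Fin d) ℂ) (ha : a.IsHermitian)
    (P : Matrix (Fin d) (Fin d) ℂ) (hPsa : P.IsHermitian) (hPidem : P * P = P)
    (n : ℕ) (hn : 1 ≤ n) (hrank : P.trace = (n : ℂ))
    (ε : ℝ) (hε : 0 < ε) :
    let abar : ℝ := ((P * a).trace).re / n
    ((P * ((a - (abar : ℂ) • 1) * (a - (abar : ℂ) • 1))).trace).re / n < ε ^ 2 →
      ∃ α : ℝ, (α : ℂ) ∈ spectrum ℂ a ∧ |α - abar| < ε := by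
  intro abar hvar
  refine eigenvalue_near_block_average_general ha
    (posSemidef_of_isStarProjection ⟨hPidem, hPsa⟩) abar hε.le ?_
  simpa [hrank] using (div_lt_iff₀ (by exact_mod_cast hn)).mp hvar
end

section
/- Let ρ be a density matrix on ℂ^d with spectral decomposition ρ = Σ_{λ} p_λ Π_λ, where the p_λ are the distinct eigenvalues of ρ and Π_λ the corresponding spectral projections of ranks n_λ. For a Hermitian d×d matrix a define a^ω := Σ_{λ} (Tr(Π_λ a)/n_λ)·Π_λ and the variance (Δ a)² := Tr(ρ (a − a^ω)²). If Δ a = 0, then a belongs to the centralizer of ω, i.e. Tr(ρ (ab − ba)) = 0 for every d×d matrix b. -/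
open scoped ComplexOrder

/-!
Writing `ρ = cᴴ c`, the variance of `a` about a Hermitian `e` is `Tr((c (a - e))ᴴ c (a - e))`, so it
vanishes only if `c (a - e) = 0`, and then `ρ (a - e) = 0`. Taking adjoints gives `(a - e) ρ = 0`,
so `ρ` commutes with `a - e`. The average `a^ω` is a real combination of the spectral projections
of `ρ`, so it is Hermitian and commutes with `ρ`; with `e = a^ω`, `ρ` commutes with `a` as well. By
cyclicity of the trace, `a` then lies in the centralizer of `ω`.
-/

section Centralizer

open scoped Matrix MatrixOrder

variable {n 𝕜 : Type*} [Fintype n] [RCLike 𝕜]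

theorem trace_mul_mul_conjTranspose_eq_zero_iff {m : Type*} [Fintype m] {ρ : Matrix n n 𝕜}
    (hρ : ρ.PosSemidef) (x : Matrix n m 𝕜) : (ρ * (x * xᴴ)).trace = 0 ↔ ρ * x = 0 := by
  classical
  obtain ⟨c, rfl⟩ := CStarAlgebra.nonneg_iff_eq_star_mul_self.mp hρ.nonneg
  have htrace : (cᴴ * c * (x * xᴴ)).trace = ((c * x)ᴴ * (c * x)).trace := by
    rw [← Matrix.mul_assoc, Matrix.trace_mul_comm, Matrix.conjTranspose_mul]
    simp only [Matrix.mul_assoc]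
  rw [Matrix.star_eq_conjTranspose, htrace, Matrix.trace_conjTranspose_mul_self_eq_zero_iff,
    Matrix.conjTranspose_mul_self_mul_eq_zero]

theorem commute_of_trace_mul_sq_eq_zero {ρ x : Matrix n n 𝕜} (hρ : ρ.PosSemidef)
    (hx : x.IsHermitian) (h : (ρ * (x * x)).trace = 0) : Commute ρ x := by
  have hρx : ρ * x = 0 :=
    (trace_mul_mul_conjTranspose_eq_zero_iff hρ x).mp (by rwa [hx.eq])
  exact (hρ.isHermitian.isSelfAdjoint.commute_iff hx.isSelfAdjoint).mpr (hρx ▸ .zero _)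

theorem trace_mul_commutator_eq_zero_of_commute {R : Type*} [CommRing R] {ρ a : Matrix n n R}
    (h : Commute ρ a) (b : Matrix n n R) : (ρ * (a * b - b * a)).trace = 0 := by
  rw [Matrix.mul_sub, Matrix.trace_sub, ← Matrix.mul_assoc, ← Matrix.mul_assoc,
    Matrix.trace_mul_comm (ρ * b) a, ← Matrix.mul_assoc, h.eq, sub_self]

theorem zero_variance_implies_centralizer_general {ρ a e : Matrix n n 𝕜} (hρ : ρ.PosSemidef)
    (ha : a.IsHermitian) (he : e.IsHermitian) (hρe : Commute ρ e)
    (hvar : (ρ * ((a - e) * (a - e))).trace = 0) (b : Matrix n n 𝕜) :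
    (ρ * (a * b - b * a)).trace = 0 := by
  have hρa : Commute ρ (a - e + e) :=
    (commute_of_trace_mul_sq_eq_zero hρ (ha.sub he) hvar).add_right hρe
  exact trace_mul_commutator_eq_zero_of_commute (sub_add_cancel a e ▸ hρa) b

end Centralizer

theorem commute_sum_smul_sum_smul {ι R A : Type*} [Fintype ι] [CommSemiring R] [Semiring A]
    [Algebra R A] {P : ι → A} (hP : Pairwise fun l m => Commute (P l) (P m)) (p c : ι → R) :
    Commute (∑ l, p l • P l) (∑ l, c l • P l) := by
  refine Commute.sum_left _ _ _ fun l _ => Commute.sum_right _ _ _ fun m _ => ?_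
  have hlm : Commute (P l) (P m) := by
    rcases eq_or_ne l m with rfl | hne
    · exact Commute.refl _
    · exact hP hne
  exact (hlm.smul_right _).smul_left _

section SpectralAverage

variable {ι n K : Type*} [Fintype ι] [Fintype n] [Field K]

/-- The average `a^ω = ∑ l, (Tr(P l a) / Tr(P l)) P l` of `a` over the blocks of a family `P` of
spectral projections, whose ranks are expressed as traces. A block of trace zero contributes `0`,
by the convention `x / 0 = 0`. -/
def spectralAverage (P : ι → Matrix n n K) (a : Matrix n n K) : Matrix n n K :=
  ∑ l, ((P l * a).trace / (P l).trace) • P l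

theorem commute_sum_smul_spectralAverage {P : ι → Matrix n n K}
    (hP : Pairwise fun l m => Commute (P l) (P m)) (p : ι → K) (a : Matrix n n K) :
    Commute (∑ l, p l • P l) (spectralAverage P a) := by
  classical
  exact commute_sum_smul_sum_smul hP p _

theorem isSelfAdjoint_trace_mul {R : Type*} [CommSemiring R] [StarRing R] {x y : Matrix n n R}
    (hx : x.IsHermitian) (hy : y.IsHermitian) : IsSelfAdjoint (x * y).trace := by
  rw [IsSelfAdjoint, ← Matrix.trace_conjTranspose, Matrix.conjTranspose_mul, hx.eq, hy.eq,
    Matrix.trace_mul_comm]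

theorem isHermitian_spectralAverage [StarRing K] {P : ι → Matrix n n K} {a : Matrix n n K}
    (hP : ∀ l, (P l).IsHermitian) (ha : a.IsHermitian) : (spectralAverage P a).IsHermitian := by
  refine isSelfAdjoint_sum _ fun l _ => ?_
  have htr : IsSelfAdjoint (P l).trace := by
    rw [IsSelfAdjoint, ← Matrix.trace_conjTranspose, (hP l).eq]
  exact (hP l).smul ((isSelfAdjoint_trace_mul (hP l) ha).div htr)

end SpectralAverage

/-- If the variance `Δa² = Tr(ρ (a − a^ω)²)` of a Hermitian matrix `a` vanishes,
where `a^ω = Σ_λ (Tr(Π_λ a)/n_λ)·Π_λ` is built from the spectral decomposition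
`ρ = Σ_λ p_λ Π_λ` of the density matrix, then `a` lies in the centralizer of the
state `ω = Tr(ρ ·)`. -/
theorem zero_variance_implies_centralizer {d : ℕ} (hd : 1 ≤ d)
    (ρ : Matrix (Fin d) (Fin d) ℂ) (hρ : ρ.PosSemidef) (htr : ρ.trace = 1)
    {k : ℕ} (p : Fin k → ℝ) (hp : Function.Injective p)
    (P : Fin k → Matrix (Fin d) (Fin d) ℂ)
    (hPsa : ∀ l, (P l).IsHermitian)
    (hPorth : ∀ l m, l ≠ m → P l * P m = 0)
    (hPidem : ∀ l, P l * P l = P l)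
    (hPsum : ∑ l, P l = 1)
    (hspec : ρ = ∑ l, (p l : ℂ) • P l)
    (nl : Fin k → ℕ) (hnl : ∀ l, 0 < nl l) (hranks : ∀ l, (P l).trace = (nl l : ℂ))
    (a : Matrix (Fin d) (Fin d) ℂ) (ha : a.IsHermitian) :
    let aω : Matrix (Fin d) (Fin d) ℂ := ∑ l, ((P l * a).trace / (nl l : ℂ)) • P l
    (ρ * ((a - aω) * (a - aω))).trace = 0 →
      ∀ b : Matrix (Fin d) (Fin d) ℂ, (ρ * (a * b - b * a)).trace = 0 := by
  intro aω
  have haω : aω = spectralAverage P a := by simp only [aω, spectralAverage, hranks]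
  have hPcomm : Pairwise fun l m => Commute (P l) (P m) := fun l m hlm =>
    (hPorth l m hlm).trans (hPorth m l hlm.symm).symm
  exact zero_variance_implies_centralizer_general hρ ha
    (haω ▸ isHermitian_spectralAverage hPsa ha)
    (haω ▸ hspec ▸ commute_sum_smul_spectralAverage hPcomm _ a)
end

section
/- Let A and Ξ be finite nonempty types, let q : Ξ × A → ℝ be nonnegative, and let p : A → ℝ be nonnegative with Σ_α p(α) = 1. Suppose the fixed-point equation p(α) · Σ_β p(β)·q(ξ, β) = p(α) · q(ξ, α) holds for every α ∈ A and every ξ ∈ Ξ, and suppose the non-degeneracy condition holds: for any two distinct α, β ∈ A there exists ξ ∈ Ξ with q(ξ, α) ≠ q(ξ, β). Then p is a point mass: there exists α₀ ∈ A with p(α₀) = 1 and p(α) = 0 for all α ≠ α₀. -/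
theorem support_subsingleton_of_mul_eq_mul {A Ξ R : Type*} [Mul R] [Zero R]
    [IsLeftCancelMulZero R] {p : A → R} {m : Ξ → R} {q : Ξ × A → R}
    (hfix : ∀ α ξ, p α * m ξ = p α * q (ξ, α))
    (hnondeg : ∀ α β, α ≠ β → ∃ ξ, q (ξ, α) ≠ q (ξ, β)) :
    (Function.support p).Subsingleton := by
  intro α hα β hβ
  by_contra hne
  obtain ⟨ξ, hξ⟩ := hnondeg α β hne
  have hmα : m ξ = q (ξ, α) := mul_left_cancel₀ hα (hfix α ξ)
  have hmβ : m ξ = q (ξ, β) := mul_left_cancel₀ hβ (hfix β ξ)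
  exact hξ (hmα.symm.trans hmβ)

theorem exists_eq_of_hasSum_of_support_subsingleton {A M : Type*} [AddCommMonoid M]
    [TopologicalSpace M] [T2Space M] {p : A → M} {s : M} (hsum : HasSum p s) (hs : s ≠ 0)
    (hsupp : (Function.support p).Subsingleton) :
    ∃ α₀, p α₀ = s ∧ ∀ α, α ≠ α₀ → p α = 0 := by
  obtain ⟨α₀, hα₀⟩ : ∃ α₀, p α₀ ≠ 0 := by
    by_contra! hzero
    exact hs (hsum.unique (hasSum_zero.congr_fun hzero))
  have hoff : ∀ α, α ≠ α₀ → p α = 0 := fun α hne ↦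
    by_contra fun hα ↦ hne (hsupp hα hα₀)
  exact ⟨α₀, (hasSum_single α₀ hoff).unique hsum, hoff⟩

-- The junk value `0` of `∑'` on non-summable families plays no part: a point mass has finite
-- support.
theorem limiting_posterior_is_point_mass_general {A Ξ R : Type*} [NonAssocSemiring R]
    [Nontrivial R] [IsLeftCancelMulZero R] [TopologicalSpace R] [T2Space R]
    (q : Ξ × A → R) (p : A → R) (hpsum : HasSum p 1)
    (hfix : ∀ α ξ, p α * (∑' β, p β * q (ξ, β)) = p α * q (ξ, α))
    (hnondeg : ∀ α β, α ≠ β → ∃ ξ, q (ξ, α) ≠ q (ξ, β)) :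
    ∃ α₀ : A, p α₀ = 1 ∧ ∀ α, α ≠ α₀ → p α = 0 :=
  exists_eq_of_hasSum_of_support_subsingleton hpsum one_ne_zero
    (support_subsingleton_of_mul_eq_mul hfix hnondeg)

/-- A limiting posterior distribution of a non-degenerate indirect (non-demolition)
measurement is a point mass: if `p(α)·Σ_β p(β)q(ξ,β) = p(α)·q(ξ,α)` for all `α, ξ`,
and for any two distinct `α, β` there is a probe outcome `ξ` with `q(ξ,α) ≠ q(ξ,β)`,
then `p = δ_{α₀}` for some `α₀`. -/
theorem limiting_posterior_is_point_mass {A Ξ : Type*} [Fintype A] [Nonempty A]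
    [Fintype Ξ] [Nonempty Ξ]
    (q : Ξ × A → ℝ) (hq : ∀ ξ α, 0 ≤ q (ξ, α))
    (p : A → ℝ) (hp : ∀ α, 0 ≤ p α) (hpsum : ∑ α, p α = 1)
    (hfix : ∀ α ξ, p α * (∑ β, p β * q (ξ, β)) = p α * q (ξ, α))
    (hnondeg : ∀ α β, α ≠ β → ∃ ξ, q (ξ, α) ≠ q (ξ, β)) :
    ∃ α₀ : A, p α₀ = 1 ∧ ∀ α, α ≠ α₀ → p α = 0 :=
  limiting_posterior_is_point_mass_general q p (hpsum ▸ hasSum_fintype p)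
    (by simpa only [tsum_fintype] using hfix) hnondeg
end
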